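/- Catoni-style PAC-Bayes bound with temperature: for losses in [0,1], any prior probability measure P on H, any fixed η > 0, any n ≥ 1, and any δ ∈ (0,1), with probability at least 1 − δ over n i.i.d. samples from D, simultaneously for every probability measure Q on H: E_{h∼Q}[R(h)] ≤ E_{h∼Q}[R̂_n(h)] + (KL(Q‖P) + log(1/δ))/η + η/(2n). -/

import Mathlib

/-!
Write `g h zs = R h - R̂ₙ h` for the generalization gap and `F zs = ∫ exp (η g h zs) dP(h)`.
Hoeffding's lemma and independence give `E[exp (η g h ·)] ≤ exp (η² / (2n))` for every fixed `h`
(`integral_exp_gap_le`; Hoeffding even gives `η² / (8n)`). As the prior does not depend on the sample,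
Fubini gives `E[F] ≤ exp (η² / (2n))`, so by Markov's inequality `F < exp (η² / (2n)) / δ` outside
an event of probability at most `δ`. On the complement of that event the Donsker–Varadhan inequality
`∫ f dQ ≤ KL(Q‖P) + log ∫ exp f dP` (`integral_le_llr_add_log`), applied to `f = η g`, yields the
bound for all `Q` simultaneously, because `F` does not involve `Q`.
-/

open MeasureTheory ENNReal Classical

/-- Kullback–Leibler divergence `KL(Q‖P)`, valued in `ℝ≥0∞`: the integral of
the log-likelihood ratio when `Q ≪ P` and the ratio is integrable, `+∞`
otherwise. -/
noncomputable def klDiv' {H : Type*} [MeasurableSpace H] (Q P : Measure H) : ℝ≥0∞ :=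
  if Q ≪ P ∧ Integrable (llr Q P) Q then ENNReal.ofReal (∫ h, llr Q P h ∂Q) else ⊤

/-- Donsker–Varadhan inequality: it is Gibbs' inequality for `Q` and the tilted measure
`dP_f ∝ exp f dP`. -/
lemma integral_le_llr_add_log {H : Type*} [MeasurableSpace H] (P Q : Measure H)
    [IsProbabilityMeasure P] [IsProbabilityMeasure Q] (hac : Q ≪ P)
    (hllr : Integrable (llr Q P) Q) (f : H → ℝ) (hfQ : Integrable f Q)
    (hfP : Integrable (fun h => Real.exp (f h)) P) :
    ∫ h, f h ∂Q ≤ ∫ h, llr Q P h ∂Q + Real.log (∫ h, Real.exp (f h) ∂P) := by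
  have := isProbabilityMeasure_tilted hfP
  have h1 := InformationTheory.integral_llr_add_sub_measure_univ_nonneg
    (hac.trans (absolutelyContinuous_tilted hfP))
    (integrable_llr_tilted_right hac hfQ hllr hfP)
  rw [integral_llr_tilted_right hac hfQ hfP hllr] at h1
  simp only [probReal_univ] at h1
  linarith

/-- The generalization gap `R h - R̂ₙ h` of a hypothesis `h` on the sample `zs`. -/
noncomputable def gap {H Z : Type*} [MeasurableSpace Z] (ℓ : H → Z → ℝ) (D : Measure Z) (n : ℕ)
    (h : H) (zs : Fin n → Z) : ℝ :=
  ∫ z, ℓ h z ∂D - (n : ℝ)⁻¹ * ∑ i, ℓ h (zs i)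

section Gap

variable {H Z : Type*} [MeasurableSpace H] [MeasurableSpace Z] {ℓ : H → Z → ℝ}
  (D : Measure Z) [IsProbabilityMeasure D] {n : ℕ}

lemma measurable_risk (hℓmeas : Measurable (Function.uncurry ℓ)) :
    Measurable fun h => ∫ z, ℓ h z ∂D :=
  (hℓmeas.stronglyMeasurable.integral_prod_right (ν := D)).measurable

lemma measurable_empRisk (hℓmeas : Measurable (Function.uncurry ℓ)) :
    Measurable fun p : H × (Fin n → Z) => (n : ℝ)⁻¹ * ∑ i, ℓ p.1 (p.2 i) := by
  refine Measurable.const_mul (Finset.measurable_sum _ fun i _ => ?_) _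
  exact hℓmeas.comp (measurable_fst.prodMk ((measurable_pi_apply i).comp measurable_snd))

lemma measurable_gap (hℓmeas : Measurable (Function.uncurry ℓ)) :
    Measurable (Function.uncurry (gap ℓ D n)) :=
  ((measurable_risk D hℓmeas).comp measurable_fst).sub (measurable_empRisk hℓmeas)

lemma risk_mem_Icc (hℓbd : ∀ h z, ℓ h z ∈ Set.Icc (0:ℝ) 1) (h : H) :
    ∫ z, ℓ h z ∂D ∈ Set.Icc (0:ℝ) 1 := by
  refine ⟨integral_nonneg fun z => (hℓbd h z).1, ?_⟩
  have := integral_mono_of_nonneg (μ := D) (.of_forall fun z => (hℓbd h z).1)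
    (integrable_const (1:ℝ)) (.of_forall fun z => (hℓbd h z).2)
  simpa using this

lemma empRisk_mem_Icc (hℓbd : ∀ h z, ℓ h z ∈ Set.Icc (0:ℝ) 1) (hn : 1 ≤ n) (h : H)
    (zs : Fin n → Z) : (n : ℝ)⁻¹ * ∑ i, ℓ h (zs i) ∈ Set.Icc (0:ℝ) 1 := by
  have hn' : (0:ℝ) < n := by exact_mod_cast hn
  refine ⟨mul_nonneg (by positivity) (Finset.sum_nonneg fun i _ => (hℓbd h _).1), ?_⟩
  rw [inv_mul_le_iff₀ hn', mul_one]
  calc ∑ i, ℓ h (zs i) ≤ ∑ _i : Fin n, (1:ℝ) := Finset.sum_le_sum fun i _ => (hℓbd h _).2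
    _ = n := by simp

lemma exp_gap_le (hℓbd : ∀ h z, ℓ h z ∈ Set.Icc (0:ℝ) 1) (hn : 1 ≤ n) {η : ℝ} (hη : 0 < η)
    (h : H) (zs : Fin n → Z) : Real.exp (η * gap ℓ D n h zs) ≤ Real.exp η := by
  have h1 := (risk_mem_Icc D hℓbd h).2
  have h2 := (empRisk_mem_Icc hℓbd hn h zs).1
  refine Real.exp_le_exp.2 ?_
  have : gap ℓ D n h zs ≤ 1 := by unfold gap; linarith
  nlinarith

/-- The exponential moment factorizes over the independent coordinates, and each factor is
bounded by Hoeffding's lemma. -/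
lemma integral_exp_gap_le (hℓmeas : Measurable (Function.uncurry ℓ))
    (hℓbd : ∀ h z, ℓ h z ∈ Set.Icc (0:ℝ) 1) (hn : 1 ≤ n) (η : ℝ) (h : H) :
    ∫ zs, Real.exp (η * gap ℓ D n h zs) ∂(Measure.pi fun _ : Fin n => D) ≤
      Real.exp (η ^ 2 / (2 * n)) := by
  have hn' : (0:ℝ) < n := by exact_mod_cast hn
  have hsub := (ProbabilityTheory.hasSubgaussianMGF_of_mem_Icc (μ := D) (X := ℓ h)
    (a := 0) (b := 1) (hℓmeas.comp measurable_prodMk_left).aemeasurable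
    (.of_forall (hℓbd h))).mgf_le (-(η / n))
  have hprod : ∀ zs : Fin n → Z, Real.exp (η * gap ℓ D n h zs) =
      ∏ i, Real.exp (-(η / n) * (ℓ h (zs i) - ∫ z, ℓ h z ∂D)) := by
    intro zs
    rw [← Real.exp_sum, ← Finset.mul_sum, Finset.sum_sub_distrib]
    congr 1
    simp only [gap, Finset.sum_const, Finset.card_univ, Fintype.card_fin, nsmul_eq_mul]
    field_simp
    ring
  simp_rw [hprod]
  rw [integral_fintype_prod_eq_prod
    (f := fun (_ : Fin n) z => Real.exp (-(η / n) * (ℓ h z - ∫ z, ℓ h z ∂D)))]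
  simp only [Finset.prod_const, Finset.card_univ, Fintype.card_fin]
  calc _ ≤ (Real.exp ((((‖(1:ℝ) - 0‖₊ / 2) ^ 2 : NNReal) : ℝ) * (-(η / n)) ^ 2 / 2)) ^ n :=
        pow_le_pow_left₀ (integral_nonneg fun _ => (Real.exp_pos _).le) hsub n
    _ = Real.exp (η ^ 2 / (8 * n)) := by
        rw [← Real.exp_nat_mul]
        congr 1
        simp
        field_simp
        norm_num
        ring
    _ ≤ _ := by
        refine Real.exp_le_exp.2 ?_
        gcongr
        norm_num

end Gap

/-- Catoni-style PAC-Bayes bound with temperature: for losses in `[0,1]`,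
prior `P`, fixed `η > 0`, `n ≥ 1`, `δ ∈ (0,1)`, with probability at least
`1 − δ` over `n` i.i.d. samples from `D`, simultaneously for every posterior
probability measure `Q`:
`E_{h∼Q}[R h] ≤ E_{h∼Q}[R̂_n h] + (KL(Q‖P) + log (1/δ))/η + η/(2n)`. -/
theorem catoni_pac_bayes {H Z : Type*} [MeasurableSpace H] [MeasurableSpace Z]
    (ℓ : H → Z → ℝ) (hℓmeas : Measurable (Function.uncurry ℓ))
    (hℓbd : ∀ h z, ℓ h z ∈ Set.Icc (0:ℝ) 1)
    (P : Measure H) [IsProbabilityMeasure P]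
    (D : Measure Z) [IsProbabilityMeasure D]
    (η : ℝ) (hη : 0 < η)
    (n : ℕ) (hn : 1 ≤ n) (δ : ℝ) (hδ0 : 0 < δ) (hδ1 : δ < 1) :
    ENNReal.ofReal (1 - δ) ≤
      (Measure.pi fun _ : Fin n => D)
        {zs | ∀ Q : Measure H, IsProbabilityMeasure Q →
          ENNReal.ofReal (∫ h, (∫ z, ℓ h z ∂D) ∂Q) ≤
            ENNReal.ofReal (∫ h, ((n : ℝ)⁻¹ * ∑ i, ℓ h (zs i)) ∂Q) +
              (klDiv' Q P + ENNReal.ofReal (Real.log (1 / δ))) / ENNReal.ofReal η +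
              ENNReal.ofReal (η / (2 * n))} := by
  have hn' : (0:ℝ) < n := by exact_mod_cast hn
  set μ := Measure.pi fun _ : Fin n => D with hμ
  set F : (Fin n → Z) → ℝ := fun zs => ∫ h, Real.exp (η * gap ℓ D n h zs) ∂P with hF
  set B : ℝ := Real.exp (η ^ 2 / (2 * n)) with hB
  have hBpos : 0 < B := Real.exp_pos _
  have hmeasE : Measurable fun p : H × (Fin n → Z) => Real.exp (η * gap ℓ D n p.1 p.2) :=
    ((measurable_gap D hℓmeas).const_mul η).exp
  have hintE : Integrable (fun p : H × (Fin n → Z) => Real.exp (η * gap ℓ D n p.1 p.2))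
      (P.prod μ) := by
    refine Integrable.of_bound hmeasE.aestronglyMeasurable (Real.exp η) (.of_forall fun p => ?_)
    rw [Real.norm_of_nonneg (Real.exp_pos _).le]
    exact exp_gap_le D hℓbd hn hη p.1 p.2
  have hFmeas : Measurable F :=
    (hmeasE.stronglyMeasurable.integral_prod_left' (μ := P)).measurable
  have hFint : Integrable F μ := hintE.integral_prod_right
  have hEF : ∫ zs, F zs ∂μ ≤ B := by
    have hswap : ∫ zs, F zs ∂μ = ∫ h, ∫ zs, Real.exp (η * gap ℓ D n h zs) ∂μ ∂P :=
      (integral_integral_swap hintE).symm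
    rw [hswap]
    calc _ ≤ ∫ _h : H, B ∂P :=
          integral_mono hintE.integral_prod_left (integrable_const _)
            fun h => integral_exp_gap_le D hℓmeas hℓbd hn η h
      _ = B := by simp
  have hmark : μ.real {zs | B / δ ≤ F zs} ≤ δ := by
    have h1 := mul_meas_ge_le_integral_of_nonneg (μ := μ)
      (.of_forall fun zs => integral_nonneg fun h => (Real.exp_pos _).le) hFint (B / δ)
    have h2 : B * μ.real {zs | B / δ ≤ F zs} ≤ B * δ := by
      have h3 := h1.trans hEF
      rw [div_mul_eq_mul_div, div_le_iff₀ hδ0] at h3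
      exact h3
    exact le_of_mul_le_mul_left h2 hBpos
  have hbad : MeasurableSet {zs | B / δ ≤ F zs} := measurableSet_le measurable_const hFmeas
  have hgood : ENNReal.ofReal (1 - δ) ≤ μ {zs | B / δ ≤ F zs}ᶜ := by
    refine ENNReal.ofReal_le_of_le_toReal ?_
    have h1 := probReal_compl_eq_one_sub (μ := μ) hbad
    change 1 - δ ≤ μ.real _
    linarith
  refine hgood.trans (measure_mono fun zs hzs Q hQ => ?_)
  have hzs' : F zs < B / δ := not_le.1 hzs
  unfold klDiv'
  split_ifs with hcond
  swap
  · simp [ENNReal.top_div]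
  obtain ⟨hac, hllr⟩ := hcond
  have hRint : Integrable (fun h => ∫ z, ℓ h z ∂D) Q :=
    Integrable.of_mem_Icc 0 1 (measurable_risk D hℓmeas).aemeasurable
      (.of_forall (risk_mem_Icc D hℓbd))
  have hEint : Integrable (fun h => (n : ℝ)⁻¹ * ∑ i, ℓ h (zs i)) Q :=
    Integrable.of_mem_Icc 0 1
      ((measurable_empRisk hℓmeas).comp measurable_prodMk_right).aemeasurable
      (.of_forall fun h => empRisk_mem_Icc hℓbd hn h zs)
  have hexpP : Integrable (fun h => Real.exp (η * gap ℓ D n h zs)) P := by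
    refine Integrable.of_bound (hmeasE.comp measurable_prodMk_right).aestronglyMeasurable
      (Real.exp η) (.of_forall fun h => ?_)
    rw [Real.norm_of_nonneg (Real.exp_pos _).le]
    exact exp_gap_le D hℓbd hn hη h zs
  have hDV := integral_le_llr_add_log P Q hac hllr (fun h => η * gap ℓ D n h zs)
    ((hRint.sub hEint).const_mul η) hexpP
  have hgap : ∫ h, η * gap ℓ D n h zs ∂Q =
      η * (∫ h, (∫ z, ℓ h z ∂D) ∂Q - ∫ h, ((n : ℝ)⁻¹ * ∑ i, ℓ h (zs i)) ∂Q) := by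
    rw [integral_const_mul, ← integral_sub hRint hEint]
    rfl
  have hlogF : Real.log (F zs) ≤ η ^ 2 / (2 * n) + Real.log (1 / δ) := by
    calc Real.log (F zs) ≤ Real.log (B / δ) :=
          Real.log_le_log (integral_exp_pos hexpP) hzs'.le
      _ = _ := by
          rw [div_eq_mul_one_div, Real.log_mul hBpos.ne' (by positivity), hB, Real.log_exp]
  have hlogδ : 0 ≤ Real.log (1 / δ) := Real.log_nonneg (by rw [le_div_iff₀ hδ0]; linarith)
  have hreal : ∫ h, (∫ z, ℓ h z ∂D) ∂Q ≤ ∫ h, ((n : ℝ)⁻¹ * ∑ i, ℓ h (zs i)) ∂Q +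
      (∫ h, llr Q P h ∂Q + Real.log (1 / δ)) / η + η / (2 * n) := by
    have h1 : η * (∫ h, (∫ z, ℓ h z ∂D) ∂Q - ∫ h, ((n : ℝ)⁻¹ * ∑ i, ℓ h (zs i)) ∂Q) ≤
        ∫ h, llr Q P h ∂Q + Real.log (1 / δ) + η ^ 2 / (2 * n) := by
      rw [← hgap]
      linarith
    rw [mul_comm, ← le_div_iff₀ hη, add_div] at h1
    have h2 : η ^ 2 / (2 * n) / η = η / (2 * n) := by field_simp
    rw [h2] at h1
    linarith
  -- `ofReal` is subadditive, so nonnegativity of the individual terms plays no role.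
  refine (ENNReal.ofReal_le_ofReal hreal).trans ?_
  refine ENNReal.ofReal_add_le.trans (add_le_add ?_ le_rfl)
  refine ENNReal.ofReal_add_le.trans (add_le_add le_rfl ?_)
  rw [ENNReal.ofReal_div_of_pos hη]
  exact ENNReal.div_le_div_right ENNReal.ofReal_add_le _
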